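/- arXiv:1706.09860 — 2 statements merged into one kernel-verified Lean document; each statement's English description precedes it below -/
import Mathlib

section
/- If T is a Dunford-Schwartz operator on ℓ∞ and x ∈ ℓ_p with 1 ≤ p < ∞, then there exists x̂ ∈ ℓ_p such that the Cesàro averages (1/n) Σ_{k=0}^{n−1} T^k(x) converge to x̂ in the supremum norm ‖·‖_∞. -/
open Filter Finset Topology

/-- The supremum norm of a real sequence. -/
noncomputable def supNorm (x : ℕ → ℝ) : ℝ := ⨆ n, |x n|

/-- `x` is a bounded sequence (i.e. `x ∈ ℓ∞`). -/
def IsBdd (x : ℕ → ℝ) : Prop := ∃ C, ∀ n, |x n| ≤ C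

/-- The non-increasing rearrangement of a bounded sequence, `0`-indexed:
`(x*)_n = inf over finite F with card F ≤ n of sup_{k ∉ F} |x k|`. -/
noncomputable def rearr (x : ℕ → ℝ) (n : ℕ) : ℝ :=
  sInf { r : ℝ | ∃ F : Finset ℕ, F.card ≤ n ∧ r = ⨆ k : {k : ℕ // k ∉ F}, |x k.1| }

/-- A Dunford–Schwartz operator: a linear operator which is an `ℓ₁`-contraction
and an `ℓ∞`-contraction. -/
def IsDS (T : (ℕ → ℝ) →ₗ[ℝ] (ℕ → ℝ)) : Prop :=
  (∀ x : ℕ → ℝ, Summable (fun n => |x n|) →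
      Summable (fun n => |T x n|) ∧ ∑' n, |T x n| ≤ ∑' n, |x n|) ∧
  (∀ x : ℕ → ℝ, IsBdd x → IsBdd (T x) ∧ supNorm (T x) ≤ supNorm x)

/-- The Cesàro average `A(n,T)(x) = (1/n) ∑_{k=0}^{n-1} T^k x`. -/
noncomputable def cesaro (T : (ℕ → ℝ) →ₗ[ℝ] (ℕ → ℝ)) (n : ℕ) (x : ℕ → ℝ) : ℕ → ℝ :=
  fun s => (∑ k ∈ Finset.range n, (⇑T)^[k] x s) / n

/-- Membership in `ℓ_p`. -/
def Memlp (p : ℝ) (x : ℕ → ℝ) : Prop := Summable (fun n => |x n| ^ p)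

/-- The `ℓ_p` norm. -/
noncomputable def lpNorm (p : ℝ) (x : ℕ → ℝ) : ℝ := (∑' n, |x n| ^ p) ^ (1 / p)

/-
The contraction hypotheses imply that the matrix of `T` has rows and columns of `ℓ¹`-norm at most
one, so by the Schur test `T` contracts every `ℓᵖ`. Contractivity on `ℓ²` gives von Neumann's mean
ergodic theorem, hence norm convergence in `ℓ∞` of the averages of finitely supported sequences.
On `ℓ∞` the averages are equicontinuous, so their Cauchy set is closed there, and it therefore
contains all of `ℓᵖ`, the finitely supported sequences being dense in `ℓᵖ` for `p < ∞`. The limit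
lies in `ℓᵖ` because it is also a pointwise limit of a bounded sequence of `ℓᵖ`.
-/

open scoped ENNReal lp Uniformity

section SchurTest

variable {ι κ : Type*} {p : ℝ}

lemma abs_sum_mul_rpow_le_sum_abs_mul_rpow (hp : 1 ≤ p) (s : Finset ι) (w x : ι → ℝ)
    (hw : ∑ j ∈ s, |w j| ≤ 1) :
    |∑ j ∈ s, w j * x j| ^ p ≤ ∑ j ∈ s, |w j| * |x j| ^ p := by
  have hp₀ : 0 < p := zero_lt_one.trans_le hp
  have holder : |∑ j ∈ s, w j * x j| ≤ (∑ j ∈ s, |w j| * |x j| ^ p) ^ p⁻¹ :=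
    calc |∑ j ∈ s, w j * x j|
        ≤ ∑ j ∈ s, |w j| * |x j| := by
          simpa only [abs_mul] using abs_sum_le_sum_abs (fun j => w j * x j) s
      _ ≤ (∑ j ∈ s, |w j|) ^ (1 - p⁻¹) * (∑ j ∈ s, |w j| * |x j| ^ p) ^ p⁻¹ :=
          Real.inner_le_weight_mul_Lp_of_nonneg s hp _ _ (fun _ => abs_nonneg _)
            fun _ => abs_nonneg _
      _ ≤ (∑ j ∈ s, |w j| * |x j| ^ p) ^ p⁻¹ :=
          mul_le_of_le_one_left (by positivity) <|
            Real.rpow_le_one (sum_nonneg fun _ _ => abs_nonneg _) hw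
              (sub_nonneg.2 (inv_le_one_of_one_le₀ hp))
  exact (Real.le_rpow_inv_iff_of_pos (abs_nonneg _) (by positivity) hp₀).1 holder

lemma sum_abs_sum_mul_rpow_le (hp : 1 ≤ p) (a : ι → κ → ℝ) (s : Finset ι) (t : Finset κ)
    (hrow : ∀ i ∈ s, ∑ j ∈ t, |a i j| ≤ 1) (hcol : ∀ j ∈ t, ∑ i ∈ s, |a i j| ≤ 1) (x : κ → ℝ) :
    ∑ i ∈ s, |∑ j ∈ t, a i j * x j| ^ p ≤ ∑ j ∈ t, |x j| ^ p :=
  calc ∑ i ∈ s, |∑ j ∈ t, a i j * x j| ^ p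
      ≤ ∑ i ∈ s, ∑ j ∈ t, |a i j| * |x j| ^ p :=
        sum_le_sum fun i hi => abs_sum_mul_rpow_le_sum_abs_mul_rpow hp t (a i) x (hrow i hi)
    _ = ∑ j ∈ t, (∑ i ∈ s, |a i j|) * |x j| ^ p := by
        rw [sum_comm]
        simp only [sum_mul]
    _ ≤ ∑ j ∈ t, |x j| ^ p :=
        sum_le_sum fun j hj => mul_le_of_le_one_left (by positivity) (hcol j hj)

end SchurTest

lemma isClosed_setOfPred_cauchySeq_of_equicontinuous {ι X α : Type*} [Nonempty ι] [SemilatticeSup ι]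
    [TopologicalSpace X] [UniformSpace α] {F : ι → X → α} (hF : Equicontinuous F) :
    IsClosed {x | CauchySeq (F · x)} := by
  refine isClosed_of_closure_subset fun x hx => ?_
  refine (𝓤 α).basis_sets.cauchySeq_iff.2 fun V hV => ?_
  obtain ⟨W, hW, hsymm, hWV⟩ := comp_comp_symm_mem_uniformity_sets hV
  obtain ⟨y, hxy, hy⟩ := mem_closure_iff_nhds.1 hx _ (hF x W hW)
  obtain ⟨N, hN⟩ := (𝓤 α).basis_sets.cauchySeq_iff.1 hy W hW
  exact ⟨N, fun m hm n hn =>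
    hWV ⟨F n y, ⟨F m y, hxy m, hN m hm n hn⟩, hsymm.symm _ _ (hxy n)⟩⟩

lemma norm_birkhoffAverage_id_le (𝕜 : Type*) {E : Type*} [RCLike 𝕜] [NormedAddCommGroup E]
    [NormedSpace 𝕜 E] {f : E → E} (hf : ∀ x, ‖f x‖ ≤ ‖x‖) (n : ℕ) (x : E) :
    ‖birkhoffAverage 𝕜 f id n x‖ ≤ ‖x‖ := by
  have norm_iterate_le (k : ℕ) : ‖f^[k] x‖ ≤ ‖x‖ := by
    induction k with
    | zero => exact le_rfl
    | succ k ih =>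
      rw [Function.iterate_succ_apply']
      exact (hf _).trans ih
  have norm_sum_le : ‖birkhoffSum f id n x‖ ≤ n * ‖x‖ := by
    simpa [birkhoffSum] using norm_sum_le_of_le (range n) fun k _ => norm_iterate_le k
  rw [birkhoffAverage, norm_smul, norm_inv, RCLike.norm_natCast]
  exact inv_mul_le_of_le_mul₀ n.cast_nonneg (norm_nonneg x) norm_sum_le

section LpToLinfty

variable (𝕜 : Type*) {ι : Type*} {E : ι → Type*} [NormedField 𝕜] [∀ i, NormedAddCommGroup (E i)]
  [∀ i, NormedSpace 𝕜 (E i)]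

/-- The inclusion of `ℓᵖ` into `ℓ∞` as a continuous linear map. -/
noncomputable def lpToLinfty (p : ℝ≥0∞) [Fact (1 ≤ p)] : lp E p →L[𝕜] lp E ∞ :=
  (lp.linearMapOfLE 𝕜 E le_top).mkContinuous 1 fun f => by
    rw [one_mul]
    refine lp.norm_le_of_forall_le (norm_nonneg f) fun i => ?_
    simpa using lp.norm_apply_le_norm (zero_lt_one.trans_le Fact.out).ne' f i

lemma coe_lpToLinfty {p : ℝ≥0∞} [Fact (1 ≤ p)] (f : lp E p) : ⇑(lpToLinfty 𝕜 p f) = f :=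
  lp.coe_linearMapOfLE_apply le_top f

end LpToLinfty

lemma supNorm_coe (f : ℓ^∞(ℕ, ℝ)) : supNorm f = ‖f‖ :=
  (lp.norm_eq_ciSup f).symm

lemma memℓp_infty_iff_isBdd {x : ℕ → ℝ} : Memℓp x ∞ ↔ IsBdd x := by
  simp [memℓp_infty_iff, IsBdd, BddAbove, upperBounds, Set.Nonempty]

lemma memℓp_ofReal_iff_memlp {p : ℝ} (hp : 0 < p) {x : ℕ → ℝ} :
    Memℓp x (ENNReal.ofReal p) ↔ Memlp p x := by
  rw [memℓp_gen_iff (by rwa [ENNReal.toReal_ofReal hp.le]), ENNReal.toReal_ofReal hp.le]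
  rfl

section MatrixEntry

variable {R ι κ : Type*} [CommSemiring R] [DecidableEq κ] (T : (κ → R) →ₗ[R] (ι → R))

/-- The `(i, j)` entry of the possibly infinite matrix of `T` in the standard unit vectors. It
determines `T` only on finitely supported vectors. -/
def matrixEntry (i : ι) (j : κ) : R :=
  T (Pi.single j 1) i

lemma map_sum_single_apply (s : Finset κ) (x : κ → R) (i : ι) :
    T (∑ j ∈ s, Pi.single j (x j)) i = ∑ j ∈ s, matrixEntry T i j * x j := by
  have single_eq (j : κ) : (Pi.single j (x j) : κ → R) = x j • Pi.single j 1 := by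
    simp [← Pi.single_smul]
  simp only [single_eq, map_sum, map_smul, Finset.sum_apply, Pi.smul_apply, smul_eq_mul,
    matrixEntry, mul_comm]

end MatrixEntry

namespace IsDS

variable {T : (ℕ → ℝ) →ₗ[ℝ] (ℕ → ℝ)} (hT : IsDS T)

include hT

lemma abs_apply_le {x : ℕ → ℝ} {C : ℝ} (hx : ∀ n, |x n| ≤ C) (n : ℕ) : |T x n| ≤ C := by
  obtain ⟨⟨D, hD⟩, hsup⟩ := hT.2 x ⟨C, hx⟩
  calc |T x n| ≤ supNorm (T x) := le_ciSup ⟨D, Set.forall_mem_range.2 hD⟩ n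
    _ ≤ supNorm x := hsup
    _ ≤ C := ciSup_le hx

lemma sum_abs_matrixEntry_row_le_one (s : Finset ℕ) (i : ℕ) : ∑ j ∈ s, |matrixEntry T i j| ≤ 1 := by
  let σ : ℕ → ℝ := fun j => SignType.sign (matrixEntry T i j)
  have abs_sign_le (n : ℕ) : |σ n| ≤ 1 := by
    rcases lt_trichotomy (matrixEntry T i n) 0 with h | h | h <;> simp [σ, h]
  have abs_sum_single_le (n : ℕ) : |(∑ j ∈ s, Pi.single j (σ j) : ℕ → ℝ) n| ≤ 1 := by
    by_cases hn : n ∈ s <;> simp [Finset.sum_apply, Pi.single_apply, hn, abs_sign_le]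
  calc ∑ j ∈ s, |matrixEntry T i j|
      = T (∑ j ∈ s, Pi.single j (σ j)) i := by
        simp only [map_sum_single_apply, σ, self_mul_sign]
    _ ≤ 1 := (le_abs_self _).trans (hT.abs_apply_le abs_sum_single_le i)

lemma sum_abs_matrixEntry_col_le_one (s : Finset ℕ) (j : ℕ) : ∑ i ∈ s, |matrixEntry T i j| ≤ 1 := by
  have hasSum_abs_single : HasSum (fun n => |(Pi.single j 1 : ℕ → ℝ) n|) 1 := by
    simpa using hasSum_single (f := fun n => |(Pi.single j 1 : ℕ → ℝ) n|) j
      fun n hn => by simp [hn]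
  obtain ⟨hsum, hle⟩ := hT.1 _ hasSum_abs_single.summable
  calc ∑ i ∈ s, |matrixEntry T i j|
      ≤ ∑' i, |matrixEntry T i j| := hsum.sum_le_tsum s fun _ _ => abs_nonneg _
    _ ≤ 1 := hle.trans_eq hasSum_abs_single.tsum_eq

variable {p : ℝ≥0∞} [Fact (1 ≤ p)]

lemma hasSum_matrixEntry_mul (hp : p ≠ ∞) (f : ℓ^p(ℕ, ℝ)) (i : ℕ) :
    HasSum (fun j => matrixEntry T i j * f j) (T f i) := by
  let φ : ℓ^p(ℕ, ℝ) →+ ℝ :=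
    (Pi.evalAddMonoidHom _ i).comp (T.toAddMonoidHom.comp (lp.coeFnAddMonoidHom _ p))
  have hφ : Continuous φ := AddMonoidHomClass.continuous_of_bound φ 1 fun g => by
    rw [one_mul]
    exact hT.abs_apply_le (lp.norm_apply_le_norm (zero_lt_one.trans_le Fact.out).ne' g) i
  have hasSum_map_single := (lp.hasSum_single hp f).map φ hφ
  have map_single (j : ℕ) : φ (lp.single p j (f j)) = matrixEntry T i j * f j := by
    simpa [φ, lp.coeFn_single] using map_sum_single_apply T {j} f i
  exact hasSum_map_single.congr_fun fun j => (map_single j).symm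

lemma sum_abs_apply_rpow_le (hp : p ≠ ∞) (f : ℓ^p(ℕ, ℝ)) (s : Finset ℕ) :
    ∑ i ∈ s, |T f i| ^ p.toReal ≤ ‖f‖ ^ p.toReal := by
  have hp₁ : 1 ≤ p.toReal := by simpa using ENNReal.toReal_mono hp (Fact.out : 1 ≤ p)
  have hlim : Tendsto (fun t : Finset ℕ => ∑ i ∈ s, |∑ j ∈ t, matrixEntry T i j * f j| ^ p.toReal)
      atTop (𝓝 (∑ i ∈ s, |T f i| ^ p.toReal)) :=
    tendsto_finsetSum s fun i _ =>
      (hT.hasSum_matrixEntry_mul hp f i).abs.rpow_const (Or.inr (by positivity))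
  refine le_of_tendsto' hlim fun t => ?_
  calc ∑ i ∈ s, |∑ j ∈ t, matrixEntry T i j * f j| ^ p.toReal
      ≤ ∑ j ∈ t, |f j| ^ p.toReal :=
        sum_abs_sum_mul_rpow_le hp₁ (matrixEntry T) s t
          (fun i _ => hT.sum_abs_matrixEntry_row_le_one t i)
          (fun j _ => hT.sum_abs_matrixEntry_col_le_one s j) f
    _ ≤ ‖f‖ ^ p.toReal := lp.sum_rpow_le_norm_rpow (by positivity) f t

lemma memℓp_apply (f : ℓ^p(ℕ, ℝ)) : Memℓp (T f) p := by
  rcases eq_or_ne p ∞ with rfl | hp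
  · exact memℓp_infty_iff_isBdd.2 (hT.2 f (memℓp_infty_iff_isBdd.1 (lp.memℓp f))).1
  · exact memℓp_gen' (hT.sum_abs_apply_rpow_le hp f)

lemma norm_apply_le (f : ℓ^p(ℕ, ℝ)) : ‖(⟨T f, hT.memℓp_apply f⟩ : ℓ^p(ℕ, ℝ))‖ ≤ ‖f‖ := by
  rcases eq_or_ne p ∞ with rfl | hp
  · exact lp.norm_le_of_forall_le (norm_nonneg f)
      (hT.abs_apply_le (lp.norm_apply_le_norm ENNReal.top_ne_zero f))
  · have hp₀ : 0 < p.toReal := ENNReal.toReal_pos (zero_lt_one.trans_le Fact.out).ne' hp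
    exact lp.norm_le_of_forall_sum_le hp₀ (norm_nonneg f) (hT.sum_abs_apply_rpow_le hp f)

variable (p) in
/-- The operator on `ℓᵖ`, `1 ≤ p ≤ ∞`, induced by a Dunford–Schwartz operator. -/
noncomputable def toLp : ℓ^p(ℕ, ℝ) →L[ℝ] ℓ^p(ℕ, ℝ) :=
  LinearMap.mkContinuous
    { toFun f := ⟨T f, hT.memℓp_apply f⟩
      map_add' f g := lp.ext (map_add T (f : ℕ → ℝ) g)
      map_smul' c f := lp.ext (map_smul T c (f : ℕ → ℝ)) }
    1 fun f => (hT.norm_apply_le f).trans_eq (one_mul ‖f‖).symm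

lemma norm_toLp_le_one : ‖hT.toLp p‖ ≤ 1 :=
  LinearMap.mkContinuous_norm_le _ zero_le_one _

lemma coe_iterate_toLp (f : ℓ^p(ℕ, ℝ)) (k : ℕ) : ⇑((hT.toLp p)^[k] f) = T^[k] f :=
  Function.Semiconj.iterate_right (f := ((↑) : ℓ^p(ℕ, ℝ) → ℕ → ℝ)) (fun _ => rfl) k f

lemma coe_birkhoffAverage_toLp (f : ℓ^p(ℕ, ℝ)) (n : ℕ) :
    ⇑(birkhoffAverage ℝ (hT.toLp p) id n f) = cesaro T n f := by
  ext s
  let evalAt : ℓ^p(ℕ, ℝ) →ₗ[ℝ] ℝ := lp.evalₗ (fun _ => ℝ) p s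
  calc birkhoffAverage ℝ (hT.toLp p) id n f s
      = birkhoffAverage ℝ (hT.toLp p) evalAt n f := map_birkhoffAverage ℝ ℝ evalAt _ id n f
    _ = cesaro T n f s := by
        simp [evalAt, birkhoffAverage, birkhoffSum, cesaro, coe_iterate_toLp, div_eq_inv_mul]

lemma lpToLinfty_birkhoffAverage_toLp (f : ℓ^p(ℕ, ℝ)) (n : ℕ) :
    lpToLinfty ℝ p (birkhoffAverage ℝ (hT.toLp p) id n f) =
      birkhoffAverage ℝ (hT.toLp ∞) id n (lpToLinfty ℝ p f) :=
  lp.ext <| by simp only [coe_lpToLinfty, coe_birkhoffAverage_toLp]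

lemma cauchySeq_birkhoffAverage_two (f : ℓ²(ℕ, ℝ)) :
    CauchySeq fun n => birkhoffAverage ℝ (hT.toLp 2) id n f :=
  ((hT.toLp 2).tendsto_birkhoffAverage_orthogonalProjection hT.norm_toLp_le_one f).cauchySeq

lemma cauchySeq_birkhoffAverage_lpToLinfty_two (f : ℓ²(ℕ, ℝ)) :
    CauchySeq fun n => birkhoffAverage ℝ (hT.toLp ∞) id n (lpToLinfty ℝ 2 f) := by
  simp only [← lpToLinfty_birkhoffAverage_toLp]
  exact (lpToLinfty ℝ 2).uniformContinuous.comp_cauchySeq (hT.cauchySeq_birkhoffAverage_two f)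

lemma cauchySeq_birkhoffAverage_lpToLinfty (hp : p ≠ ∞) (f : ℓ^p(ℕ, ℝ)) :
    CauchySeq fun n => birkhoffAverage ℝ (hT.toLp ∞) id n (lpToLinfty ℝ p f) := by
  have hclosed : IsClosed {g | CauchySeq fun n => birkhoffAverage ℝ (hT.toLp ∞) id n g} :=
    isClosed_setOfPred_cauchySeq_of_equicontinuous <| (uniformEquicontinuous_birkhoffAverage ℝ
      ((hT.toLp ∞).lipschitz.weaken hT.norm_toLp_le_one) uniformContinuous_id).equicontinuous
  have hlim := (lp.hasSum_single hp f).mapL (lpToLinfty ℝ p)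
  refine hclosed.mem_of_tendsto hlim (Eventually.of_forall fun s => ?_)
  have sum_single_eq : ∑ j ∈ s, lpToLinfty ℝ p (lp.single p j (f j)) =
      lpToLinfty ℝ 2 (∑ j ∈ s, lp.single 2 j (f j)) := by
    rw [map_sum]
    exact sum_congr rfl fun j _ => lp.ext <| by simp only [coe_lpToLinfty, lp.coeFn_single]
  rw [sum_single_eq]
  exact hT.cauchySeq_birkhoffAverage_lpToLinfty_two _

lemma memℓp_of_tendsto_birkhoffAverage {f : ℓ^p(ℕ, ℝ)} {y : ℓ^∞(ℕ, ℝ)}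
    (hy : Tendsto (fun n => birkhoffAverage ℝ (hT.toLp ∞) id n (lpToLinfty ℝ p f)) atTop (𝓝 y)) :
    Memℓp y p := by
  have hbdd : Bornology.IsBounded (Set.range fun n => birkhoffAverage ℝ (hT.toLp p) id n f) :=
    isBounded_iff_forall_norm_le.2 ⟨‖f‖, Set.forall_mem_range.2 fun n =>
      norm_birkhoffAverage_id_le ℝ hT.norm_apply_le n f⟩
  refine lp.memℓp_of_tendsto hbdd (l := atTop) ?_
  refine tendsto_pi_nhds.2 fun i => ?_
  have tendsto_apply := ((lp.lipschitzWith_one_eval ∞ i).continuous.tendsto y).comp hy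
  simpa [Function.comp_def, coe_birkhoffAverage_toLp, coe_lpToLinfty] using tendsto_apply

end IsDS

/-- Individual ergodic theorem in `ℓ_p`: for a Dunford–Schwartz operator `T` and
`x ∈ ℓ_p`, `1 ≤ p < ∞`, the Cesàro averages converge in the supremum norm to some
`x̂ ∈ ℓ_p`. -/
theorem stmt9 (T : (ℕ → ℝ) →ₗ[ℝ] (ℕ → ℝ)) (hT : IsDS T)
    (p : ℝ) (hp : 1 ≤ p) (x : ℕ → ℝ) (hx : Memlp p x) :
    ∃ x' : ℕ → ℝ, Memlp p x' ∧
      Tendsto (fun n => supNorm (fun s => cesaro T n x s - x' s)) atTop (nhds 0) := by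
  have : Fact (1 ≤ ENNReal.ofReal p) := ⟨ENNReal.one_le_ofReal.2 hp⟩
  have hp₀ : 0 < p := zero_lt_one.trans_le hp
  let f : ℓ^(ENNReal.ofReal p)(ℕ, ℝ) := ⟨x, (memℓp_ofReal_iff_memlp hp₀).2 hx⟩
  obtain ⟨y, hy⟩ := cauchySeq_tendsto_of_complete
    (hT.cauchySeq_birkhoffAverage_lpToLinfty ENNReal.ofReal_ne_top f)
  refine ⟨y, (memℓp_ofReal_iff_memlp hp₀).1 (hT.memℓp_of_tendsto_birkhoffAverage hy), ?_⟩
  refine (tendsto_iff_norm_sub_tendsto_zero.1 hy).congr fun n => ?_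
  rw [← supNorm_coe, lp.coeFn_sub, hT.coe_birkhoffAverage_toLp, coe_lpToLinfty]
  rfl
end

section
/- Let E be a fully symmetric sequence space with E ≠ ℓ∞, and T a Dunford-Schwartz operator on ℓ∞. Then for every x ∈ E there exists x̂ ∈ E such that ‖(1/n) Σ_{k=0}^{n−1} T^k(x) − x̂‖_∞ → 0. -/
/-! Comparing `T x` with `T` applied to `x` clipped at a level `t ≥ 0` shows that a
Dunford–Schwartz operator does not increase the excess `∑ (|x i| - t)⁺` over any level. At the
levels `t = rearr x m` this yields the majorization `T x ≺ x`; integrated over `t` it yields that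
`T` contracts `ℓ²`, where von Neumann's mean ergodic theorem applies.

Since `ℓ²` is uniformly dense in the null sequences and Cesàro averages are again Dunford–Schwartz,
the averages of every null sequence `x` converge uniformly, and their limit is still majorized by
`x`. Finally, a space closed under majorization which contains a bounded sequence not tending to
zero contains every bounded sequence, so `E ≠ ℓ∞` forces `E` to consist of null sequences.
-/

open Filter Finset Topology

/-- A fully symmetric sequence space: a nonzero linear subspace of `ℓ∞` with a complete
norm `N` such that Hardy–Littlewood–Pólya majorization `x ≺ y`, `y ∈ E`, `x ∈ ℓ∞` imply
`x ∈ E` and `N x ≤ N y`. -/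
structure FullySymmSeqSpace where
  carrier : Submodule ℝ (ℕ → ℝ)
  nontrivial : carrier ≠ ⊥
  bdd : ∀ x ∈ carrier, IsBdd x
  N : (ℕ → ℝ) → ℝ
  N_zero : N 0 = 0
  N_pos : ∀ x ∈ carrier, x ≠ 0 → 0 < N x
  N_add : ∀ x ∈ carrier, ∀ y ∈ carrier, N (x + y) ≤ N x + N y
  N_smul : ∀ (c : ℝ), ∀ x ∈ carrier, N (c • x) = |c| * N x
  complete : ∀ f : ℕ → (ℕ → ℝ), (∀ k, f k ∈ carrier) →
    (∀ ε > 0, ∃ K, ∀ m ≥ K, ∀ n ≥ K, N (f m - f n) < ε) →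
    ∃ x ∈ carrier, Filter.Tendsto (fun k => N (f k - x)) Filter.atTop (nhds 0)
  fullySymm : ∀ y ∈ carrier, ∀ x : ℕ → ℝ, IsBdd x →
    (∀ k, ∑ n ∈ Finset.range (k + 1), rearr x n ≤ ∑ n ∈ Finset.range (k + 1), rearr y n) →
    x ∈ carrier ∧ N x ≤ N y

open scoped ENNReal

/-! ### Rearrangements and majorization -/

lemma IsBdd.abs_le_supNorm {x : ℕ → ℝ} (hx : IsBdd x) (n : ℕ) : |x n| ≤ supNorm x := by
  obtain ⟨C, hC⟩ := hx
  exact le_ciSup (f := fun n => |x n|) ⟨C, Set.forall_mem_range.2 hC⟩ n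

lemma rearr_le_iSup_compl (x : ℕ → ℝ) {n : ℕ} {F : Finset ℕ} (hF : F.card ≤ n) :
    rearr x n ≤ ⨆ k : {k : ℕ // k ∉ F}, |x k.1| :=
  csInf_le ⟨0, by rintro r ⟨F, -, rfl⟩; exact Real.iSup_nonneg fun _ => abs_nonneg _⟩ ⟨F, hF, rfl⟩

lemma rearr_le_of_forall_abs_le {x : ℕ → ℝ} {C : ℝ} (hC : ∀ k, |x k| ≤ C) (n : ℕ) :
    rearr x n ≤ C :=
  (rearr_le_iSup_compl x (F := ∅) n.zero_le).trans <|
    Real.iSup_le (fun _ => hC _) ((abs_nonneg _).trans (hC 0))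

lemma le_rearr {x : ℕ → ℝ} (hx : IsBdd x) {c : ℝ} {n : ℕ}
    (h : ∀ F : Finset ℕ, F.card ≤ n → ∃ k ∉ F, c ≤ |x k|) : c ≤ rearr x n := by
  obtain ⟨C, hC⟩ := hx
  refine le_csInf ⟨_, ∅, n.zero_le, rfl⟩ ?_
  rintro r ⟨F, hF, rfl⟩
  obtain ⟨k, hkF, hck⟩ := h F hF
  exact hck.trans <| le_ciSup (f := fun k : {k : ℕ // k ∉ F} => |x k.1|)
    ⟨C, Set.forall_mem_range.2 fun _ => hC _⟩ ⟨k, hkF⟩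

lemma rearr_nonneg (x : ℕ → ℝ) (n : ℕ) : 0 ≤ rearr x n :=
  Real.sInf_nonneg <| by rintro r ⟨F, -, rfl⟩; exact Real.iSup_nonneg fun _ => abs_nonneg _

lemma rearr_antitone (x : ℕ → ℝ) : Antitone (rearr x) := by
  intro m n hmn
  refine le_csInf ⟨_, ∅, m.zero_le, rfl⟩ ?_
  rintro r ⟨F, hF, rfl⟩
  exact rearr_le_iSup_compl x (hF.trans hmn)

lemma sum_abs_le_sum_rearr {x : ℕ → ℝ} (hx : IsBdd x) (F : Finset ℕ) :
    ∑ i ∈ F, |x i| ≤ ∑ n ∈ range F.card, rearr x n := by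
  induction hm : F.card generalizing F with
  | zero => simp [Finset.card_eq_zero.mp hm]
  | succ m ih =>
    obtain ⟨j, hj, hmin⟩ := F.exists_min_image (fun i => |x i|) (Finset.card_pos.mp (by omega))
    have hj_le : |x j| ≤ rearr x m := le_rearr hx fun G hG => by
      obtain ⟨k, hkF, hkG⟩ := Finset.exists_mem_notMem_of_card_lt_card (s := G) (t := F) (by omega)
      exact ⟨k, hkG, hmin k hkF⟩
    rw [← Finset.sum_erase_add _ _ hj, Finset.sum_range_succ]
    exact add_le_add (ih _ (by rw [Finset.card_erase_of_mem hj, hm, Nat.add_sub_cancel])) hj_le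

lemma exists_card_eq_lt_sum_abs (x : ℕ → ℝ) {b : ℝ} {m : ℕ} (hb : b < ∑ n ∈ range m, rearr x n) :
    ∃ F : Finset ℕ, F.card = m ∧ b < ∑ i ∈ F, |x i| := by
  induction m generalizing b with
  | zero => exact ⟨∅, rfl, by simpa using hb⟩
  | succ m ih =>
    rw [Finset.sum_range_succ, ← sub_lt_iff_lt_add] at hb
    obtain ⟨F, hF, hbF⟩ := ih hb
    have hsup : b - ∑ i ∈ F, |x i| < ⨆ k : {k : ℕ // k ∉ F}, |x k.1| := by
      linarith [rearr_le_iSup_compl x hF.le]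
    have : Nonempty {k : ℕ // k ∉ F} := nonempty_subtype.2 (Infinite.exists_notMem_finset F)
    obtain ⟨⟨k, hkF⟩, hk⟩ := exists_lt_of_lt_ciSup hsup
    refine ⟨insert k F, by rw [Finset.card_insert_of_notMem hkF, hF], ?_⟩
    rw [Finset.sum_insert hkF]
    linarith

/-- Hardy–Littlewood–Pólya (weak) majorization `x ≺ y`, the relation under which a fully
symmetric sequence space is closed downwards. -/
def IsMajorizedBy (x y : ℕ → ℝ) : Prop :=
  ∀ k, ∑ n ∈ range (k + 1), rearr x n ≤ ∑ n ∈ range (k + 1), rearr y n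

lemma isMajorizedBy_of_sum_abs_le {x y : ℕ → ℝ}
    (h : ∀ F : Finset ℕ, ∑ i ∈ F, |x i| ≤ ∑ n ∈ range F.card, rearr y n) :
    IsMajorizedBy x y := by
  intro k
  by_contra! hlt
  obtain ⟨F, hF, hsum⟩ := exists_card_eq_lt_sum_abs x hlt
  exact hsum.not_ge (hF ▸ h F)

lemma sum_range_sub_le_of_antitone {M : Type*} [AddCommGroup M] [PartialOrder M]
    [IsOrderedAddMonoid M] {f : ℕ → M} (hf : Antitone f) (p m : ℕ) :
    ∑ n ∈ range p, (f n - f m) ≤ ∑ n ∈ range m, (f n - f m) := by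
  rcases le_total p m with h | h
  · exact Finset.sum_le_sum_of_subset_of_nonneg (Finset.range_mono h) fun n hn _ =>
      sub_nonneg.2 (hf (Finset.mem_range.1 hn).le)
  · rw [← Finset.sum_range_add_sum_Ico _ h]
    exact add_le_of_nonpos_right <| Finset.sum_nonpos fun n hn =>
      sub_nonpos.2 (hf (Finset.mem_Ico.1 hn).1)

/-! ### Excess over a level -/

/-- The total excess `∑ (|x i| - t)⁺` of a family over the level `t`. Comparing it at all levels
controls both majorization and square sums. It takes values in `ℝ≥0∞`, where `ENNReal.ofReal`
performs the truncation at `0`, so that no summability has to be assumed. -/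
noncomputable def excess {ι : Type*} (x : ι → ℝ) (t : ℝ) : ℝ≥0∞ :=
  ∑' i, ENNReal.ofReal (|x i| - t)

lemma ofReal_sum_abs_sub_le_excess {ι : Type*} (x : ι → ℝ) (t : ℝ) (F : Finset ι) :
    ENNReal.ofReal (∑ i ∈ F, (|x i| - t)) ≤ excess x t :=
  (Finset.le_sum_of_subadditive ENNReal.ofReal ENNReal.ofReal_zero.le
    (fun _ _ => ENNReal.ofReal_add_le) F _).trans (ENNReal.sum_le_tsum F)

lemma excess_rearr_le {x : ℕ → ℝ} (hx : IsBdd x) (m : ℕ) :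
    excess x (rearr x m) ≤ ENNReal.ofReal (∑ n ∈ range m, (rearr x n - rearr x m)) := by
  refine ENNReal.summable.tsum_le_of_sum_le fun F => ?_
  set G := F.filter fun i => rearr x m ≤ |x i|
  have hsum : ∑ i ∈ G, (|x i| - rearr x m) ≤ ∑ n ∈ range m, (rearr x n - rearr x m) := calc
    ∑ i ∈ G, (|x i| - rearr x m)
      ≤ ∑ n ∈ range G.card, (rearr x n - rearr x m) := by
        simpa [Finset.sum_sub_distrib] using sum_abs_le_sum_rearr hx G
    _ ≤ ∑ n ∈ range m, (rearr x n - rearr x m) :=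
        sum_range_sub_le_of_antitone (rearr_antitone x) _ _
  calc ∑ i ∈ F, ENNReal.ofReal (|x i| - rearr x m)
      = ∑ i ∈ G, ENNReal.ofReal (|x i| - rearr x m) := by
        refine (Finset.sum_filter_of_ne fun i _ hi => ?_).symm
        exact (sub_pos.1 (ENNReal.ofReal_pos.1 (pos_iff_ne_zero.2 hi))).le
    _ = ENNReal.ofReal (∑ i ∈ G, (|x i| - rearr x m)) :=
        (ENNReal.ofReal_sum_of_nonneg fun i hi => sub_nonneg.2 (Finset.mem_filter.1 hi).2).symm
    _ ≤ _ := ENNReal.ofReal_le_ofReal hsum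

lemma sum_abs_le_sum_rearr_of_excess_le {x y : ℕ → ℝ} (hy : IsBdd y)
    (h : ∀ t, 0 ≤ t → excess x t ≤ excess y t) (F : Finset ℕ) :
    ∑ i ∈ F, |x i| ≤ ∑ n ∈ range F.card, rearr y n := by
  set t := rearr y F.card
  have hle : ∑ i ∈ F, (|x i| - t) ≤ ∑ n ∈ range F.card, (rearr y n - t) := by
    refine (ENNReal.ofReal_le_ofReal_iff (Finset.sum_nonneg fun n hn => ?_)).1 <|
      (ofReal_sum_abs_sub_le_excess x t F).trans <|
        (h t (rearr_nonneg y _)).trans (excess_rearr_le hy _)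
    exact sub_nonneg.2 (rearr_antitone y (Finset.mem_range.1 hn).le)
  simpa [Finset.sum_sub_distrib] using hle

lemma ofReal_sq_eq_lintegral_excess (a : ℝ) :
    ENNReal.ofReal (a ^ 2) = 2 * ∫⁻ t in Set.Ioi 0, ENNReal.ofReal (|a| - t) := by
  have hint : ∫ t in (0 : ℝ)..|a|, (|a| - t) = a ^ 2 / 2 := by
    rw [intervalIntegral.integral_sub (by simp) (by simp), integral_id]
    simp only [intervalIntegral.integral_const, smul_eq_mul, ← sq_abs a]
    ring
  have hvanish : ∫⁻ t in Set.Ioi |a|, ENNReal.ofReal (|a| - t) = 0 :=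
    MeasureTheory.setLIntegral_eq_zero measurableSet_Ioi fun t ht =>
      ENNReal.ofReal_of_nonpos (sub_nonpos.2 (le_of_lt ht))
  rw [← Set.Ioc_union_Ioi_eq_Ioi (abs_nonneg a),
    MeasureTheory.lintegral_union measurableSet_Ioi (Set.Ioc_disjoint_Ioi le_rfl), hvanish,
    add_zero, ← MeasureTheory.ofReal_integral_eq_lintegral_ofReal,
    ← intervalIntegral.integral_of_le (abs_nonneg a), hint]
  · rw [← ENNReal.ofReal_ofNat, ← ENNReal.ofReal_mul zero_le_two, mul_div_cancel₀ _ two_ne_zero]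
  · exact (continuous_const.sub continuous_id).integrableOn_Ioc
  · filter_upwards [MeasureTheory.ae_restrict_mem measurableSet_Ioc] with t ht
    exact sub_nonneg.2 ht.2

lemma tsum_sq_le_of_excess_le {ι : Type*} [Countable ι] {x y : ι → ℝ}
    (h : ∀ t, 0 ≤ t → excess x t ≤ excess y t) :
    ∑' i, ENNReal.ofReal (x i ^ 2) ≤ ∑' i, ENNReal.ofReal (y i ^ 2) := by
  have key (z : ι → ℝ) :
      ∑' i, ENNReal.ofReal (z i ^ 2) = 2 * ∫⁻ t in Set.Ioi 0, excess z t := by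
    simp_rw [ofReal_sq_eq_lintegral_excess, ENNReal.tsum_mul_left, excess]
    rw [MeasureTheory.lintegral_tsum fun i => by fun_prop]
  rw [key, key]
  gcongr 2 * ?_
  exact MeasureTheory.setLIntegral_mono' measurableSet_Ioi fun t ht => h t (le_of_lt ht)

/-! ### Dunford–Schwartz operators -/

lemma isDS_iff {T : (ℕ → ℝ) →ₗ[ℝ] (ℕ → ℝ)} :
    IsDS T ↔ (∀ x : ℕ → ℝ, ∑' i, ‖T x i‖ₑ ≤ ∑' i, ‖x i‖ₑ) ∧
      ∀ (x : ℕ → ℝ) (c : ℝ), (∀ i, |x i| ≤ c) → ∀ i, |T x i| ≤ c := by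
  have ne_top_iff (x : ℕ → ℝ) : ∑' i, ‖x i‖ₑ ≠ ⊤ ↔ Summable fun i => |x i| :=
    tsum_enorm_ne_top_iff_summable_norm
  have tsum_enorm_eq {x : ℕ → ℝ} (hx : Summable fun i => |x i|) :
      ∑' i, ‖x i‖ₑ = ENNReal.ofReal (∑' i, |x i|) := by
    simp_rw [Real.enorm_eq_ofReal_abs, ENNReal.ofReal_tsum_of_nonneg (fun _ => abs_nonneg _) hx]
  refine and_congr ⟨fun h x => ?_, fun h x hx => ?_⟩ ⟨fun h x c hx i => ?_, fun h x hx => ?_⟩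
  · by_cases htop : ∑' i, ‖x i‖ₑ = ⊤
    · exact htop ▸ le_top
    · have hx : Summable fun i => |x i| := (ne_top_iff x).1 htop
      rw [tsum_enorm_eq hx, tsum_enorm_eq (h x hx).1]
      exact ENNReal.ofReal_le_ofReal (h x hx).2
  · have hTx : Summable fun i => |T x i| := (ne_top_iff _).1 <|
      ne_top_of_le_ne_top ((ne_top_iff x).2 hx) (h x)
    have hle := h x
    rw [tsum_enorm_eq hx, tsum_enorm_eq hTx] at hle
    exact ⟨hTx, (ENNReal.ofReal_le_ofReal_iff (tsum_nonneg fun i => abs_nonneg _)).1 hle⟩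
  · obtain ⟨hTx, hle⟩ := h x ⟨c, hx⟩
    exact (hTx.abs_le_supNorm i).trans (hle.trans (ciSup_le hx))
  · have hTx := h x _ hx.abs_le_supNorm
    exact ⟨⟨_, hTx⟩, ciSup_le hTx⟩

namespace IsDS

variable {T : (ℕ → ℝ) →ₗ[ℝ] (ℕ → ℝ)}

lemma tsum_enorm_le (hT : IsDS T) (x : ℕ → ℝ) : ∑' i, ‖T x i‖ₑ ≤ ∑' i, ‖x i‖ₑ :=
  (isDS_iff.1 hT).1 x

lemma abs_apply_le_s11 (hT : IsDS T) {x : ℕ → ℝ} {c : ℝ} (hx : ∀ i, |x i| ≤ c) (i : ℕ) :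
    |T x i| ≤ c :=
  (isDS_iff.1 hT).2 x c hx i

protected lemma zero : IsDS 0 :=
  isDS_iff.2 ⟨fun x => by simp, fun x c hx i => by simpa using (abs_nonneg _).trans (hx i)⟩

protected lemma pow (hT : IsDS T) (k : ℕ) : IsDS (T ^ k) := by
  induction k with
  | zero => exact isDS_iff.2 ⟨fun x => le_rfl, fun x c hx => hx⟩
  | succ k ih =>
    rw [pow_succ']
    exact isDS_iff.2 ⟨fun x => (hT.tsum_enorm_le _).trans (ih.tsum_enorm_le x),
      fun x c hx => hT.abs_apply_le_s11 (ih.abs_apply_le_s11 hx)⟩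

end IsDS

lemma convex_setOf_isDS : Convex ℝ {T | IsDS T} := by
  intro S hS T hT a b ha hb hab
  refine isDS_iff.2 ⟨fun x => ?_, fun x c hx i => ?_⟩
  · calc ∑' i, ‖(a • S + b • T) x i‖ₑ
        ≤ ∑' i, (‖a‖ₑ * ‖S x i‖ₑ + ‖b‖ₑ * ‖T x i‖ₑ) := by
          refine ENNReal.tsum_le_tsum fun i => (enorm_add_le _ _).trans_eq ?_
          simp [enorm_mul]
      _ = ‖a‖ₑ * ∑' i, ‖S x i‖ₑ + ‖b‖ₑ * ∑' i, ‖T x i‖ₑ := by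
          rw [ENNReal.tsum_add, ENNReal.tsum_mul_left, ENNReal.tsum_mul_left]
      _ ≤ ‖a‖ₑ * ∑' i, ‖x i‖ₑ + ‖b‖ₑ * ∑' i, ‖x i‖ₑ := by
          gcongr ‖a‖ₑ * ?_ + ‖b‖ₑ * ?_
          exacts [hS.tsum_enorm_le x, hT.tsum_enorm_le x]
      _ = ∑' i, ‖x i‖ₑ := by
          rw [← add_mul, Real.enorm_of_nonneg ha, Real.enorm_of_nonneg hb,
            ← ENNReal.ofReal_add ha hb, hab, ENNReal.ofReal_one, one_mul]
  · calc |(a • S + b • T) x i| ≤ |a * S x i| + |b * T x i| := abs_add_le _ _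
      _ = a * |S x i| + b * |T x i| := by rw [abs_mul, abs_mul, abs_of_nonneg ha, abs_of_nonneg hb]
      _ ≤ a * c + b * c := by
          gcongr
          exacts [hS.abs_apply_le_s11 hx i, hT.abs_apply_le_s11 hx i]
      _ = c := by rw [← add_mul, hab, one_mul]

/-- The Cesàro average `A(n, T)` as a linear operator. -/
noncomputable def cesaroMap (T : (ℕ → ℝ) →ₗ[ℝ] (ℕ → ℝ)) (n : ℕ) : (ℕ → ℝ) →ₗ[ℝ] (ℕ → ℝ) :=
  ∑ k ∈ range n, (n : ℝ)⁻¹ • T ^ k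

lemma cesaroMap_apply (T : (ℕ → ℝ) →ₗ[ℝ] (ℕ → ℝ)) (n : ℕ) (x : ℕ → ℝ) :
    cesaroMap T n x = cesaro T n x := by
  ext s
  simp [cesaroMap, cesaro, Finset.mul_sum, Module.End.pow_apply, div_eq_inv_mul]

lemma exists_clip (a : ℝ) {t : ℝ} (ht : 0 ≤ t) :
    ∃ c, |c| ≤ t ∧ ‖a - c‖ₑ = ENNReal.ofReal (|a| - t) := by
  rcases le_total |a| t with h | h
  · exact ⟨a, h, by rw [sub_self, enorm_zero, ENNReal.ofReal_of_nonpos (sub_nonpos.2 h)]⟩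
  rw [← Real.enorm_of_nonneg (sub_nonneg.2 h)]
  rcases le_total 0 a with ha | ha
  · exact ⟨t, (abs_of_nonneg ht).le, by rw [abs_of_nonneg ha]⟩
  · refine ⟨-t, by rw [abs_neg, abs_of_nonneg ht], ?_⟩
    rw [abs_of_nonpos ha, ← enorm_neg, neg_sub, neg_sub_comm]

namespace IsDS

variable {T : (ℕ → ℝ) →ₗ[ℝ] (ℕ → ℝ)}

protected lemma cesaroMap (hT : IsDS T) (n : ℕ) : IsDS (cesaroMap T n) := by
  rcases eq_or_ne n 0 with rfl | hn
  · simpa [_root_.cesaroMap] using IsDS.zero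
  · exact convex_setOf_isDS.sum_mem (fun _ _ => by positivity) (by simp [hn]) fun k _ => hT.pow k

lemma excess_le (hT : IsDS T) (x : ℕ → ℝ) {t : ℝ} (ht : 0 ≤ t) :
    excess (T x) t ≤ excess x t := by
  choose v hv hxv using fun i => exists_clip (x i) ht
  have hTv := hT.abs_apply_le_s11 hv
  have hle (i : ℕ) : ENNReal.ofReal (|T x i| - t) ≤ ‖T (x - v) i‖ₑ := by
    rw [Real.enorm_eq_ofReal_abs, map_sub, Pi.sub_apply]
    exact ENNReal.ofReal_le_ofReal (by linarith [hTv i, abs_sub_abs_le_abs_sub (T x i) (T v i)])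
  calc excess (T x) t ≤ ∑' i, ‖T (x - v) i‖ₑ := ENNReal.tsum_le_tsum hle
    _ ≤ ∑' i, ‖(x - v) i‖ₑ := hT.tsum_enorm_le _
    _ = excess x t := tsum_congr hxv

lemma sum_abs_apply_le_sum_rearr (hT : IsDS T) {x : ℕ → ℝ} (hx : IsBdd x) (F : Finset ℕ) :
    ∑ i ∈ F, |T x i| ≤ ∑ n ∈ range F.card, rearr x n :=
  sum_abs_le_sum_rearr_of_excess_le hx (fun _ => hT.excess_le x) F

end IsDS

/-! ### The mean ergodic theorem in `ℓ²` -/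

lemma tendstoUniformly_coe_lp {α ι E : Type*} [NormedAddCommGroup E] {p : ℝ≥0∞}
    [Fact (1 ≤ p)] {l : Filter ι} {F : ι → lp (fun _ : α => E) p} {f : lp (fun _ : α => E) p}
    (h : Tendsto F l (𝓝 f)) : TendstoUniformly (fun n => (F n : α → E)) f l := by
  refine Metric.tendstoUniformly_iff.2 fun ε hε => ?_
  filter_upwards [Metric.tendsto_nhds.1 h ε hε] with n hn i
  rw [dist_eq_norm] at hn
  rw [dist_comm, dist_eq_norm]
  exact (lp.norm_apply_le_norm (zero_lt_one.trans_le Fact.out).ne' (F n - f) i).trans_lt hn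

namespace IsDS

variable {T : (ℕ → ℝ) →ₗ[ℝ] (ℕ → ℝ)}

lemma sum_norm_rpow_two_le (hT : IsDS T) (f : lp (fun _ : ℕ => ℝ) 2) (F : Finset ℕ) :
    ∑ i ∈ F, ‖T f i‖ ^ (2 : ℝ≥0∞).toReal ≤ ‖f‖ ^ (2 : ℝ≥0∞).toReal := by
  have hf : Summable fun i => f i ^ 2 := by simpa using (lp.memℓp f).summable (by norm_num)
  have hnorm : ‖f‖ ^ 2 = ∑' i, f i ^ 2 := by
    simpa using lp.norm_rpow_eq_tsum (p := 2) (by norm_num) f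
  have hle : ENNReal.ofReal (∑ i ∈ F, T f i ^ 2) ≤ ENNReal.ofReal (‖f‖ ^ 2) := calc
    ENNReal.ofReal (∑ i ∈ F, T f i ^ 2) = ∑ i ∈ F, ENNReal.ofReal (T f i ^ 2) :=
        ENNReal.ofReal_sum_of_nonneg fun i _ => sq_nonneg _
    _ ≤ ∑' i, ENNReal.ofReal (T f i ^ 2) := ENNReal.sum_le_tsum F
    _ ≤ ∑' i, ENNReal.ofReal (f i ^ 2) := tsum_sq_le_of_excess_le fun _ => hT.excess_le f
    _ = ENNReal.ofReal (‖f‖ ^ 2) := by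
        rw [hnorm, ENNReal.ofReal_tsum_of_nonneg (fun i => sq_nonneg _) hf]
  simpa using (ENNReal.ofReal_le_ofReal_iff (sq_nonneg _)).1 hle

/-- The contraction of the Hilbert space `ℓ²` given by a Dunford–Schwartz operator. -/
noncomputable def toLpTwo (hT : IsDS T) :
    lp (fun _ : ℕ => ℝ) 2 →L[ℝ] lp (fun _ : ℕ => ℝ) 2 :=
  LinearMap.mkContinuous
    { toFun := fun f => ⟨T f, memℓp_gen' (hT.sum_norm_rpow_two_le f)⟩
      map_add' := fun f g => Subtype.ext (map_add T (f : ℕ → ℝ) g)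
      map_smul' := fun c f => Subtype.ext (map_smul T c (f : ℕ → ℝ)) } 1
    fun f => by
      rw [one_mul]
      exact lp.norm_le_of_forall_sum_le (by norm_num) (norm_nonneg _) (hT.sum_norm_rpow_two_le f)

lemma norm_toLpTwo_le_one (hT : IsDS T) : ‖hT.toLpTwo‖ ≤ 1 :=
  LinearMap.mkContinuous_norm_le _ zero_le_one _

lemma coe_iterate_toLpTwo (hT : IsDS T) (f : lp (fun _ : ℕ => ℝ) 2) (k : ℕ) :
    ⇑(hT.toLpTwo^[k] f) = T^[k] f := by
  have hsemi : Function.Semiconj (fun g : lp (fun _ : ℕ => ℝ) 2 => (g : ℕ → ℝ)) hT.toLpTwo T :=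
    fun _ => rfl
  exact hsemi.iterate_right k f

lemma coe_birkhoffAverage_toLpTwo (hT : IsDS T) (f : lp (fun _ : ℕ => ℝ) 2) (n : ℕ) :
    ⇑(birkhoffAverage ℝ hT.toLpTwo id n f) = cesaro T n f := by
  ext s
  rw [birkhoffAverage, birkhoffSum, lp.coeFn_smul, Pi.smul_apply, lp.coeFn_sum, Finset.sum_apply]
  simp [cesaro, coe_iterate_toLpTwo, div_eq_inv_mul]

lemma exists_tendstoUniformly_cesaro_of_memℓp_two (hT : IsDS T) {x : ℕ → ℝ} (hx : Memℓp x 2) :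
    ∃ x', TendstoUniformly (cesaro T · x) x' atTop := by
  let f : lp (fun _ : ℕ => ℝ) 2 := ⟨x, hx⟩
  have hlim := hT.toLpTwo.tendsto_birkhoffAverage_orthogonalProjection hT.norm_toLpTwo_le_one f
  exact ⟨_, by simpa only [hT.coe_birkhoffAverage_toLpTwo] using tendstoUniformly_coe_lp hlim⟩

end IsDS

/-! ### Uniform convergence for null sequences -/

lemma exists_tendstoUniformly_of_forall_dist_le {α β : Type*} [PseudoMetricSpace β]
    [CompleteSpace β] {F : ℕ → α → β}
    (h : ∀ ε > 0, ∃ (G : ℕ → α → β) (g : α → β),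
      TendstoUniformly G g atTop ∧ ∀ n s, dist (F n s) (G n s) ≤ ε) :
    ∃ f, TendstoUniformly F f atTop := by
  have hF : UniformCauchySeqOn F atTop Set.univ := by
    refine Metric.uniformCauchySeqOn_iff.2 fun ε hε => ?_
    obtain ⟨G, g, hG, hFG⟩ := h (ε / 3) (by positivity)
    obtain ⟨N, hN⟩ := Metric.uniformCauchySeqOn_iff.1
      (tendstoUniformlyOn_univ.2 hG).uniformCauchySeqOn (ε / 3) (by positivity)
    refine ⟨N, fun m hm n hn s hs => ?_⟩
    have hsn := hFG n s
    rw [dist_comm] at hsn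
    linarith [dist_triangle4 (F m s) (G m s) (G n s) (F n s), hFG m s, hN m hm n hn s hs]
  choose f hf using fun s => cauchySeq_tendsto_of_complete (hF.cauchySeq (Set.mem_univ s))
  exact ⟨f, tendstoUniformlyOn_univ.1 (hF.tendstoUniformlyOn_of_tendsto fun s _ => hf s)⟩

lemma exists_memℓp_forall_abs_sub_le {α : Type*} {x : α → ℝ} (hx : Tendsto x cofinite (𝓝 0))
    {ε : ℝ} (hε : 0 < ε) (p : ℝ≥0∞) : ∃ y : α → ℝ, Memℓp y p ∧ ∀ i, |x i - y i| ≤ ε := by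
  have hfin : {i | ε ≤ |x i|}.Finite := by
    simpa using eventually_cofinite.1 (hx.abs.eventually_lt_const (by simpa using hε))
  refine ⟨{i | ε ≤ |x i|}.indicator x, ?_, fun i => ?_⟩
  · exact (memℓp_zero (hfin.subset fun i hi => Set.mem_of_indicator_ne_zero hi)).of_exponent_ge
      zero_le
  · by_cases hi : ε ≤ |x i|
    · simp [hi, hε.le]
    · simpa [hi] using (not_le.1 hi).le

namespace IsDS

variable {T : (ℕ → ℝ) →ₗ[ℝ] (ℕ → ℝ)}

lemma exists_tendstoUniformly_cesaro (hT : IsDS T) {x : ℕ → ℝ} (hx : Tendsto x atTop (𝓝 0)) :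
    ∃ x', TendstoUniformly (cesaro T · x) x' atTop := by
  refine exists_tendstoUniformly_of_forall_dist_le fun ε hε => ?_
  obtain ⟨y, hy, hxy⟩ := exists_memℓp_forall_abs_sub_le (Nat.cofinite_eq_atTop ▸ hx) hε 2
  obtain ⟨y', hy'⟩ := hT.exists_tendstoUniformly_cesaro_of_memℓp_two hy
  refine ⟨_, y', hy', fun n s => ?_⟩
  rw [Real.dist_eq, ← cesaroMap_apply, ← cesaroMap_apply, ← Pi.sub_apply, ← map_sub]
  exact (hT.cesaroMap n).abs_apply_le_s11 hxy s

theorem exists_isMajorizedBy_tendstoUniformly_cesaro (hT : IsDS T) {x : ℕ → ℝ}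
    (hx : Tendsto x atTop (𝓝 0)) :
    ∃ x', IsBdd x' ∧ IsMajorizedBy x' x ∧ TendstoUniformly (cesaro T · x) x' atTop := by
  obtain ⟨x', hx'⟩ := hT.exists_tendstoUniformly_cesaro hx
  obtain ⟨C, hC⟩ : IsBdd x := by
    obtain ⟨C, hC⟩ := (Metric.isBounded_range_of_tendsto x hx).exists_norm_le
    exact ⟨C, Set.forall_mem_range.1 hC⟩
  have hlim (s : ℕ) : Tendsto (fun n => |cesaroMap T n x s|) atTop (𝓝 |x' s|) := by
    simpa only [cesaroMap_apply] using (hx'.tendsto_at s).abs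
  refine ⟨x', ⟨C, fun s => ?_⟩, isMajorizedBy_of_sum_abs_le fun F => ?_, hx'⟩
  · exact le_of_tendsto' (hlim s) fun n => (hT.cesaroMap n).abs_apply_le_s11 hC s
  · exact le_of_tendsto' (tendsto_finsetSum F fun s _ => hlim s) fun n =>
      (hT.cesaroMap n).sum_abs_apply_le_sum_rearr ⟨C, hC⟩ F

end IsDS

/-! ### Fully symmetric spaces -/

lemma exists_isMajorizedBy_smul_of_not_tendsto_zero {x y : ℕ → ℝ} (hx : IsBdd x)
    (hx0 : ¬ Tendsto x atTop (𝓝 0)) (hy : IsBdd y) : ∃ c : ℝ, IsMajorizedBy y (c • x) := by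
  obtain ⟨B, hB⟩ := hx
  obtain ⟨C, hC⟩ := hy
  have hC0 : 0 ≤ C := (abs_nonneg _).trans (hC 0)
  obtain ⟨δ, hδ, hfreq⟩ : ∃ δ > 0, ∀ N, ∃ n ≥ N, δ ≤ |x n| := by
    simpa [Metric.tendsto_atTop] using hx0
  have habs (n : ℕ) : |((C / δ) • x) n| = C / δ * |x n| := by
    rw [Pi.smul_apply, smul_eq_mul, abs_mul, abs_of_nonneg (by positivity)]
  refine ⟨C / δ, fun k => Finset.sum_le_sum fun n _ => (rearr_le_of_forall_abs_le hC n).trans ?_⟩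
  refine le_rearr ⟨C / δ * B, fun n => ?_⟩ fun F _ => ?_
  · rw [habs]
    gcongr
    exact hB n
  · obtain ⟨N, hN⟩ := F.exists_nat_subset_range
    obtain ⟨m, hm, hδm⟩ := hfreq N
    refine ⟨m, fun hmF => hm.not_gt (Finset.mem_range.1 (hN hmF)), ?_⟩
    calc C = C / δ * δ := (div_mul_cancel₀ C hδ.ne').symm
      _ ≤ C / δ * |x m| := by gcongr
      _ = |((C / δ) • x) m| := (habs m).symm

lemma tendsto_supNorm_sub_of_tendstoUniformly {ι : Type*} {l : Filter ι} {f : ι → ℕ → ℝ}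
    {g : ℕ → ℝ} (h : TendstoUniformly f g l) :
    Tendsto (fun n => supNorm fun s => f n s - g s) l (𝓝 0) := by
  refine Metric.tendsto_nhds.2 fun ε hε => ?_
  filter_upwards [Metric.tendstoUniformly_iff.1 h (ε / 2) (half_pos hε)] with n hn
  have hle : supNorm (fun s => f n s - g s) ≤ ε / 2 := ciSup_le fun s => by
    simpa only [Real.dist_eq, abs_sub_comm] using (hn s).le
  have hnonneg : 0 ≤ supNorm (fun s => f n s - g s) := Real.iSup_nonneg fun _ => abs_nonneg _
  rw [Real.dist_0_eq_abs, abs_of_nonneg hnonneg]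
  linarith

theorem stmt11_general (E : Submodule ℝ (ℕ → ℝ)) (hbdd : ∀ x ∈ E, IsBdd x)
    (hsymm : ∀ y ∈ E, ∀ x, IsBdd x → IsMajorizedBy x y → x ∈ E)
    (hE : (E : Set (ℕ → ℝ)) ≠ {y | IsBdd y})
    (T : (ℕ → ℝ) →ₗ[ℝ] (ℕ → ℝ)) (hT : IsDS T) :
    ∀ x ∈ E, ∃ x' ∈ E,
      Tendsto (fun n => supNorm (fun s => cesaro T n x s - x' s)) atTop (𝓝 0) := by
  intro x hx
  have hx0 : Tendsto x atTop (𝓝 0) := by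
    by_contra hx0
    refine hE (Set.Subset.antisymm hbdd fun y hy => ?_)
    obtain ⟨c, hyc⟩ := exists_isMajorizedBy_smul_of_not_tendsto_zero (hbdd x hx) hx0 hy
    exact hsymm _ (E.smul_mem c hx) y hy hyc
  obtain ⟨x', hx'bdd, hx'maj, hlim⟩ := hT.exists_isMajorizedBy_tendstoUniformly_cesaro hx0
  exact ⟨x', hsymm x hx x' hx'bdd hx'maj, tendsto_supNorm_sub_of_tendstoUniformly hlim⟩

/-- Individual ergodic theorem in a fully symmetric sequence space `E ≠ ℓ∞`: the Cesàro
averages of any `x ∈ E` under a Dunford–Schwartz operator converge in the supremum norm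
to some `x̂ ∈ E`. -/
theorem stmt11 (E : FullySymmSeqSpace)
    (hE : (E.carrier : Set (ℕ → ℝ)) ≠ {y | IsBdd y})
    (T : (ℕ → ℝ) →ₗ[ℝ] (ℕ → ℝ)) (hT : IsDS T) :
    ∀ x ∈ E.carrier, ∃ x' ∈ E.carrier,
      Tendsto (fun n => supNorm (fun s => cesaro T n x s - x' s)) atTop (nhds 0) :=
  stmt11_general E.carrier E.bdd (fun y hy x hx h => (E.fullySymm y hy x hx h).1) hE T hT
end
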